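/- arXiv:1609.02473 — 3 statements merged into one kernel-verified Lean document; each statement's English description precedes it below -/
import Mathlib

section
/- Let p > 0 be a real number, c a real constant, and U : ℝ → ℝ a twice continuously differentiable positive function satisfying (1/2) p U^{p−1} (U^2 − U'^2) + (U^p − c)(U − U'') = 0 on ℝ, together with the asymptotic conditions U(z) → 0 and U'(z) → 0 as z → +∞. Then (U^p − c)(U^2 − U'^2) = 0 holds at every z ∈ ℝ. -/
/-!
Multiplied by `2 U'`, the left-hand side of the equation is the derivative of
`(U ^ p - c) * (U ^ 2 - U' ^ 2)`. This quantity is therefore constant, and the decay of `U` and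
`U'` forces the constant to be `0`. The same computation gives a first integral
`g U * (U ^ 2 - U' ^ 2)` when `U ^ p - c` is replaced by `g U` and `p * U ^ (p - 1)` by `g' U`.
-/

open Real Filter

section

variable {𝕜 : Type*}

theorem hasDerivAt_comp_mul_sq_sub_sq [NontriviallyNormedField 𝕜] {g U V : 𝕜 → 𝕜} {g' V' z : 𝕜}
    (hg : HasDerivAt g g' (U z)) (hU : HasDerivAt U (V z) z) (hV : HasDerivAt V V' z) :
    HasDerivAt (fun x => g (U x) * (U x ^ 2 - V x ^ 2))
      (V z * (g' * (U z ^ 2 - V z ^ 2) + 2 * g (U z) * (U z - V'))) z := by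
  refine ((hg.comp z hU).mul ((hU.fun_pow 2).fun_sub (hV.fun_pow 2))).congr_deriv ?_
  simp only [Function.comp_apply]
  ring

variable [RCLike 𝕜] {l : Filter 𝕜} [l.NeBot]

theorem eq_of_hasDerivAt_zero_of_tendsto {F : Type*} [NormedAddCommGroup F] [NormedSpace 𝕜 F]
    {f : 𝕜 → F} {a : F} (hf : ∀ z, HasDerivAt f 0 z) (hlim : Tendsto f l (nhds a)) (z : 𝕜) :
    f z = a := by
  have hconst (w : 𝕜) : f z = f w :=
    is_const_of_deriv_eq_zero (fun x => (hf x).differentiableAt) (fun x => (hf x).deriv) z w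
  exact tendsto_nhds_unique (tendsto_const_nhds.congr hconst) hlim

theorem second_integral_vanishes_general {g g' U : 𝕜 → 𝕜}
    (hU : Differentiable 𝕜 U) (hU' : Differentiable 𝕜 (deriv U))
    (hg : ∀ z, HasDerivAt g (g' (U z)) (U z))
    (hODE : ∀ z, (1 / 2) * g' (U z) * (U z ^ 2 - deriv U z ^ 2)
      + g (U z) * (U z - deriv (deriv U) z) = 0)
    (hbdd : l.IsBoundedUnder (· ≤ ·) fun z => ‖g (U z)‖)
    (hlim : Tendsto (fun z => U z ^ 2 - deriv U z ^ 2) l (nhds 0)) (z : 𝕜) :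
    g (U z) * (U z ^ 2 - deriv U z ^ 2) = 0 := by
  have hderiv (w : 𝕜) : HasDerivAt (fun x => g (U x) * (U x ^ 2 - deriv U x ^ 2)) 0 w := by
    convert hasDerivAt_comp_mul_sq_sub_sq (hg w) (hU w).hasDerivAt (hU' w).hasDerivAt using 1
    linear_combination -2 * deriv U w * hODE w
  exact eq_of_hasDerivAt_zero_of_tendsto hderiv
    (isBoundedUnder_le_mul_tendsto_zero hbdd hlim) z

end

theorem second_integral_vanishes (p : ℝ) (hp : 0 < p) (c : ℝ)
    (U : ℝ → ℝ) (hU : ContDiff ℝ 2 U) (hUpos : ∀ z : ℝ, 0 < U z)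
    (hODE : ∀ z : ℝ,
      (1/2) * p * U z ^ (p-1) * ((U z)^2 - (deriv U z)^2)
      + (U z ^ p - c) * (U z - deriv (deriv U) z) = 0)
    (hU0 : Tendsto U atTop (nhds 0))
    (hU1 : Tendsto (deriv U) atTop (nhds 0)) :
    ∀ z : ℝ, (U z ^ p - c) * ((U z)^2 - (deriv U z)^2) = 0 := by
  exact second_integral_vanishes_general (g := fun u => u ^ p - c)
    (g' := fun u => p * u ^ (p - 1))
    (hU.differentiable two_ne_zero) hU.differentiable_deriv_two
    (fun z => (hasDerivAt_rpow_const (.inl (hUpos z).ne')).sub_const c)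
    (fun z => by simpa only [mul_assoc] using hODE z)
    ((hU0.rpow_const (.inr hp.le)).sub_const c).norm.isBoundedUnder_le
    (by simpa using (hU0.pow 2).sub (hU1.pow 2))
end

section
/- Let p > 0 be a real number, c a real constant, a > 0, and define U(z) = a·e^{−|z|} and V(z) = −a·sgn(z)·e^{−|z|} (with sgn(0) = 0). Then the integral ∫_{−∞}^{+∞} [ −c(φ U + φ' V) + (1/2) p φ U^{p−1}(U^2 − V^2) + φ U^{p+1} + V·(φ' U^p + p φ U^{p−1} V) ] dz vanishes for every smooth compactly supported test function φ : ℝ → ℝ if and only if a^p = c. -/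
open Real MeasureTheory

open Set Filter Topology

/-! For `z ≠ 0` one has `V = -sign z * U`, hence `V² = U²`, and the integrand collapses to
`sign z * (d/dz) (φ z * (c * U z - U z ^ (p + 1)))`. The function being differentiated is
continuous across the crest, and the weak derivative of `sign` is `2δ₀`, so the integral equals
`-2 * φ 0 * (c * a - a ^ (p + 1))`. It vanishes for all test functions exactly when
`a ^ (p + 1) = c * a`. -/

theorem measurable_real_sign : Measurable Real.sign :=
  Measurable.ite measurableSet_Iio measurable_const
    (Measurable.ite measurableSet_Ioi measurable_const measurable_const)

theorem norm_real_sign_le_one (x : ℝ) : ‖Real.sign x‖ ≤ 1 := by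
  rcases Real.sign_apply_eq x with h | h | h <;> simp [h]

theorem real_sign_mul_self {x : ℝ} (hx : x ≠ 0) : Real.sign x * Real.sign x = 1 := by
  rcases Real.sign_apply_eq_of_ne_zero x hx with h | h <;> simp [h]

theorem hasDerivAt_abs_real_sign {x : ℝ} (hx : x ≠ 0) : HasDerivAt (|·|) (Real.sign x) x := by
  rcases hx.lt_or_gt with hneg | hpos
  · simpa only [Real.sign_of_neg hneg] using hasDerivAt_abs_neg hneg
  · simpa only [Real.sign_of_pos hpos] using hasDerivAt_abs_pos hpos

theorem integral_sign_smul_of_hasDerivAt_of_tendsto {E : Type*} [NormedAddCommGroup E]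
    [NormedSpace ℝ E] [CompleteSpace E] {f f' : ℝ → E} {a : ℝ} {m n : E}
    (hcont : ContinuousAt f a) (hderiv : ∀ x ≠ a, HasDerivAt f (f' x) x)
    (hint : Integrable f') (hbot : Tendsto f atBot (𝓝 m)) (htop : Tendsto f atTop (𝓝 n)) :
    ∫ x, Real.sign (x - a) • f' x = m + n - (2 : ℝ) • f a := by
  have hsign_int : Integrable fun x ↦ Real.sign (x - a) • f' x :=
    hint.bdd_smul 1 (measurable_real_sign.comp (measurable_id.sub_const a)).aestronglyMeasurable
      (.of_forall fun x ↦ norm_real_sign_le_one (x - a))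
  have hleft : ∫ x in Iic a, Real.sign (x - a) • f' x = m - f a := by
    calc ∫ x in Iic a, Real.sign (x - a) • f' x
      _ = ∫ x in Iio a, Real.sign (x - a) • f' x := integral_Iic_eq_integral_Iio
      _ = ∫ x in Iio a, -f' x := setIntegral_congr_fun measurableSet_Iio fun x hx ↦ by
          simp only [Real.sign_of_neg (sub_neg.mpr hx), neg_smul, one_smul]
      _ = -∫ x in Iic a, f' x := by rw [integral_neg, integral_Iic_eq_integral_Iio]
      _ = m - f a := by
          rw [integral_Iic_of_hasDerivAt_of_tendsto hcont.continuousWithinAt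
            (fun x hx ↦ hderiv x hx.ne) hint.integrableOn hbot, neg_sub]
  have hright : ∫ x in Ioi a, Real.sign (x - a) • f' x = n - f a := by
    calc ∫ x in Ioi a, Real.sign (x - a) • f' x
      _ = ∫ x in Ioi a, f' x := setIntegral_congr_fun measurableSet_Ioi fun x hx ↦ by
          simp only [Real.sign_of_pos (sub_pos.mpr hx), one_smul]
      _ = n - f a := integral_Ioi_of_hasDerivAt_of_tendsto hcont.continuousWithinAt
          (fun x hx ↦ hderiv x hx.ne') hint.integrableOn htop
  rw [← intervalIntegral.integral_Iic_add_Ioi hsign_int.integrableOn hsign_int.integrableOn,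
    hleft, hright, two_smul]
  abel

/-- The jump formula `(sign z * w |z|)' = w' |z| + 2 * w 0 * δ₀`, tested against `φ`. -/
theorem integral_sign_mul_deriv_mul_comp_abs {φ w w' : ℝ → ℝ} (hφ : ContDiff ℝ 1 φ)
    (hφc : HasCompactSupport φ) (hw : ∀ r, HasDerivAt w (w' r) r) (hw' : Continuous w') :
    ∫ z, (Real.sign z * (deriv φ z * w |z|) + φ z * w' |z|) = -2 * (φ 0 * w 0) := by
  have hφ' : Continuous (deriv φ) := hφ.continuous_deriv le_rfl
  have hw_cont : Continuous w := continuous_iff_continuousAt.mpr fun r ↦ (hw r).continuousAt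
  have hderiv (z : ℝ) (hz : z ≠ 0) : HasDerivAt (fun z ↦ φ z * w |z|)
      (deriv φ z * w |z| + Real.sign z * (φ z * w' |z|)) z := by
    convert! (hφ.differentiable one_ne_zero z).hasDerivAt.mul
      ((hw |z|).comp z (hasDerivAt_abs_real_sign hz)) using 1
    simp only [Function.comp_apply]
    ring
  have hint : Integrable fun z ↦ deriv φ z * w |z| + Real.sign z * (φ z * w' |z|) :=
    ((hφ'.mul (by fun_prop)).integrable_of_hasCompactSupport hφc.deriv.mul_right).add
      (((hφ.continuous.mul (by fun_prop)).integrable_of_hasCompactSupport hφc.mul_right).bdd_mul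
        measurable_real_sign.aestronglyMeasurable (.of_forall norm_real_sign_le_one))
  have hcont : Continuous fun z ↦ φ z * w |z| := hφ.continuous.mul (by fun_prop)
  have hlim : Tendsto (fun z ↦ φ z * w |z|) (cocompact ℝ) (𝓝 0) :=
    (hφc.mul_right (f' := fun z ↦ w |z|)).is_zero_at_infty
  have hjump := integral_sign_smul_of_hasDerivAt_of_tendsto hcont.continuousAt hderiv hint
    (hlim.mono_left atBot_le_cocompact) (hlim.mono_left atTop_le_cocompact)
  calc ∫ z, (Real.sign z * (deriv φ z * w |z|) + φ z * w' |z|)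
    _ = ∫ z, Real.sign (z - 0) • (deriv φ z * w |z| + Real.sign z * (φ z * w' |z|)) := by
        refine integral_congr_ae ?_
        filter_upwards [Measure.ae_ne volume 0] with z hz
        rw [sub_zero, smul_eq_mul]
        linear_combination -(φ z * w' |z|) * real_sign_mul_self hz
    _ = -2 * (φ 0 * w 0) := by
        rw [hjump, abs_zero, smul_eq_mul]
        ring

/-- The integrand of the weak travelling wave equation of the gCH equation with nonlinearity power
`p` and wave speed `c`, as a function of the pointwise values `u = U z`, `v = V z` (standing for
`U' z`), `y = φ z` and `y' = φ' z`. -/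
noncomputable def gchWeakIntegrand (p c u v y y' : ℝ) : ℝ :=
  -c * (y * u + y' * v) + (1 / 2) * p * y * u ^ (p - 1) * (u ^ 2 - v ^ 2) + y * u ^ (p + 1)
    + v * (y' * u ^ p + p * y * u ^ (p - 1) * v)

theorem gchWeakIntegrand_neg_mul {u s : ℝ} (hu : u ≠ 0) (hs : s * s = 1) (p c y y' : ℝ) :
    gchWeakIntegrand p c u (-(s * u)) y y' =
      s * (y' * (c * u - u ^ (p + 1))) + y * ((p + 1) * u ^ (p + 1) - c * u) := by
  have hp : u ^ p = u ^ (p - 1) * u := by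
    rw [← Real.rpow_add_one hu, sub_add_cancel]
  rw [gchWeakIntegrand, Real.rpow_add_one hu, hp]
  linear_combination (1 / 2 * p * y * u ^ (p - 1) * u ^ 2) * hs

theorem hasDerivAt_mul_sub_rpow_of_neg_self {u : ℝ → ℝ} {r : ℝ} (hu : HasDerivAt u (-u r) r)
    (hne : u r ≠ 0) (p c : ℝ) :
    HasDerivAt (fun r ↦ c * u r - u r ^ (p + 1)) ((p + 1) * u r ^ (p + 1) - c * u r) r := by
  convert! (hu.const_mul c).sub (hu.rpow_const (p := p + 1) (.inl hne)) using 1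
  rw [add_sub_cancel_right, Real.rpow_add_one hne]
  ring

theorem integral_gchWeakIntegrand_peakon {a : ℝ} (ha : 0 < a) (p c : ℝ) {φ : ℝ → ℝ}
    (hφ : ContDiff ℝ 1 φ) (hφc : HasCompactSupport φ) :
    ∫ z, gchWeakIntegrand p c (a * exp (-|z|)) (-a * Real.sign z * exp (-|z|)) (φ z) (deriv φ z) =
      2 * a * φ 0 * (a ^ p - c) := by
  let u : ℝ → ℝ := fun r ↦ a * exp (-r)
  have hne (r : ℝ) : u r ≠ 0 := (mul_pos ha (exp_pos _)).ne'
  have hu (r : ℝ) : HasDerivAt u (-u r) r := by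
    simpa [u] using (hasDerivAt_neg r).exp.const_mul a
  have hu_cont : Continuous u := by fun_prop
  have hw' : Continuous fun r ↦ (p + 1) * u r ^ (p + 1) - c * u r :=
    (continuous_const.mul (hu_cont.rpow_const fun r ↦ .inl (hne r))).sub (by fun_prop)
  have hv (z : ℝ) : -a * Real.sign z * exp (-|z|) = -(Real.sign z * u |z|) := by
    simp only [u]
    ring
  calc ∫ z, gchWeakIntegrand p c (a * exp (-|z|)) (-a * Real.sign z * exp (-|z|)) (φ z) (deriv φ z)
    _ = ∫ z, (Real.sign z * (deriv φ z * (c * u |z| - u |z| ^ (p + 1)))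
          + φ z * ((p + 1) * u |z| ^ (p + 1) - c * u |z|)) := by
        refine integral_congr_ae ?_
        filter_upwards [Measure.ae_ne volume 0] with z hz
        rw [hv, gchWeakIntegrand_neg_mul (hne |z|) (real_sign_mul_self hz)]
    _ = -2 * (φ 0 * (c * u 0 - u 0 ^ (p + 1))) :=
        integral_sign_mul_deriv_mul_comp_abs hφ hφc
          (fun r ↦ hasDerivAt_mul_sub_rpow_of_neg_self (hu r) (hne r) p c) hw'
    _ = 2 * a * φ 0 * (a ^ p - c) := by
        rw [Real.rpow_add_one (hne 0), show u 0 = a by simp [u]]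
        ring

theorem peakon_weak_solution_iff_general (p c a : ℝ) (ha : 0 < a) (U V : ℝ → ℝ)
    (hU : ∀ z : ℝ, U z = a * Real.exp (-|z|))
    (hV : ∀ z : ℝ, V z = -a * Real.sign z * Real.exp (-|z|)) :
    (∀ φ : ℝ → ℝ, ContDiff ℝ (⊤ : ℕ∞) φ → HasCompactSupport φ →
      ∫ z : ℝ,
        (-c * (φ z * U z + deriv φ z * V z)
          + (1/2) * p * φ z * U z ^ (p-1) * ((U z)^2 - (V z)^2)
          + φ z * U z ^ (p+1)
          + V z * (deriv φ z * U z ^ p + p * φ z * U z ^ (p-1) * V z)) = 0)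
    ↔ a ^ p = c := by
  have hweak {φ : ℝ → ℝ} (hφ : ContDiff ℝ (⊤ : ℕ∞) φ) (hφc : HasCompactSupport φ) :
      ∫ z, gchWeakIntegrand p c (U z) (V z) (φ z) (deriv φ z) = 2 * a * φ 0 * (a ^ p - c) := by
    simpa only [hU, hV] using
      integral_gchWeakIntegrand_peakon ha p c (hφ.of_le (by exact_mod_cast le_top)) hφc
  constructor
  · intro h
    let bump : ContDiffBump (0 : ℝ) := default
    have hbump : bump 0 ≠ 0 :=
      (bump.pos_of_mem_ball (Metric.mem_ball_self bump.rOut_pos)).ne'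
    have hzero : 2 * a * bump 0 * (a ^ p - c) = 0 :=
      (hweak bump.contDiff bump.hasCompactSupport).symm.trans
        (h bump bump.contDiff bump.hasCompactSupport)
    have hcoeff : 2 * a * bump 0 ≠ 0 := mul_ne_zero (mul_ne_zero two_ne_zero ha.ne') hbump
    exact sub_eq_zero.mp ((mul_eq_zero_iff_left hcoeff).mp hzero)
  · rintro rfl φ hφ hφc
    exact (hweak hφ hφc).trans (by rw [sub_self, mul_zero])

theorem peakon_weak_solution_iff (p : ℝ) (hp : 0 < p) (c : ℝ)
    (a : ℝ) (ha : 0 < a)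
    (U V : ℝ → ℝ)
    (hU : ∀ z : ℝ, U z = a * Real.exp (-|z|))
    (hV : ∀ z : ℝ, V z = -a * Real.sign z * Real.exp (-|z|)) :
    (∀ φ : ℝ → ℝ, ContDiff ℝ (⊤ : ℕ∞) φ → HasCompactSupport φ →
      ∫ z : ℝ,
        (-c * (φ z * U z + deriv φ z * V z)
          + (1/2) * p * φ z * U z ^ (p-1) * ((U z)^2 - (V z)^2)
          + φ z * U z ^ (p+1)
          + V z * (deriv φ z * U z ^ p + p * φ z * U z ^ (p-1) * V z)) = 0)
    ↔ a ^ p = c :=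
  peakon_weak_solution_iff_general p c a ha U V hU hV
end

section
/- Let p > 0 be a real number and a > 0, and define U(z) = a·e^{−|z|} and V(z) = −a·sgn(z)·e^{−|z|} (with sgn(0) = 0). Then U is NOT a weak solution of the similarity ODE: there exists a smooth compactly supported test function φ : ℝ → ℝ such that ∫_{−∞}^{+∞} [ p^{−1}(φ U + φ' V) + (1/2) p φ' U^{p−1}(U^2 − V^2) + φ' U^{p+1} + (φ'' U^p + p φ' U^{p−1} V)·V ] dz ≠ 0. Hence the weak form of the similarity ODE admits no peakon solutions with a > 0. -/
open Real MeasureTheory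

/-!
On a half-line the peakon is a single exponential `u` whose slope `v = u'` satisfies `v' = u` and
`v² = u²`. The cubic term then vanishes, and the rest of the weak integrand is the exact derivative
of `(φ / p + φ' uᵖ) v`. This primitive is compactly supported, so the whole integral is its jump
at the crest, where `v` passes from `a` to `-a`: the value is `2a (φ(0) / p + aᵖ φ'(0))`. A bump
function with `φ(0) = 1` and `φ'(0) = 0` makes it `2a / p`.
-/

open Set

section PiecewiseDerivative

variable {E : Type*} [NormedAddCommGroup E] [NormedSpace ℝ E] [CompleteSpace E]

theorem integral_eq_sub_of_eqOn_deriv {f F G : ℝ → E} {c : ℝ}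
    (hF : ContDiff ℝ 1 F) (hFc : HasCompactSupport F)
    (hG : ContDiff ℝ 1 G) (hGc : HasCompactSupport G)
    (hfF : EqOn f (deriv F) (Iio c)) (hfG : EqOn f (deriv G) (Ioi c)) :
    ∫ z, f z = F c - G c := by
  have integrable_deriv {H : ℝ → E} (hH : ContDiff ℝ 1 H) (hHc : HasCompactSupport H) :
      Integrable (deriv H) :=
    (hH.continuous_deriv le_rfl).integrable_of_hasCompactSupport hHc.deriv
  have hf_left : IntegrableOn f (Iic c) := by
    rw [integrableOn_Iic_iff_integrableOn_Iio]
    exact (integrable_deriv hF hFc).integrableOn.congr_fun hfF.symm measurableSet_Iio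
  have hf_right : IntegrableOn f (Ioi c) :=
    (integrable_deriv hG hGc).integrableOn.congr_fun hfG.symm measurableSet_Ioi
  have left_integral : ∫ z in Iic c, f z = F c := by
    rw [integral_Iic_eq_integral_Iio, setIntegral_congr_fun measurableSet_Iio hfF,
      ← integral_Iic_eq_integral_Iio, hFc.integral_Iic_deriv_eq hF]
  have right_integral : ∫ z in Ioi c, f z = -G c := by
    rw [setIntegral_congr_fun measurableSet_Ioi hfG, hGc.integral_Ioi_deriv_eq hG]
  rw [← intervalIntegral.integral_Iic_add_Ioi hf_left hf_right, left_integral, right_integral,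
    sub_eq_add_neg]

end PiecewiseDerivative

/-- The integrand of the weak similarity ODE for a profile `U` tested against `φ`. The slope is a
separate argument `V`, since `U` need not be differentiable everywhere. -/
noncomputable def weakIntegrand (p : ℝ) (U V φ : ℝ → ℝ) (z : ℝ) : ℝ :=
  p⁻¹ * (φ z * U z + deriv φ z * V z)
    + (1 / 2) * p * deriv φ z * U z ^ (p - 1) * (U z ^ 2 - V z ^ 2)
    + deriv φ z * U z ^ (p + 1)
    + (deriv (deriv φ) z * U z ^ p + p * deriv φ z * U z ^ (p - 1) * V z) * V z

/-- A primitive of `weakIntegrand p u v φ` where `u' = v`, `v' = u` and `u² = v²`. -/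
noncomputable def weakPrimitive (p : ℝ) (u v φ : ℝ → ℝ) (z : ℝ) : ℝ :=
  (p⁻¹ * φ z + deriv φ z * u z ^ p) * v z

section WeakPrimitive

variable {p : ℝ} {u v φ : ℝ → ℝ}

theorem hasDerivAt_weakPrimitive {z : ℝ} (hφ : DifferentiableAt ℝ φ z)
    (hφ' : DifferentiableAt ℝ (deriv φ) z) (hu : HasDerivAt u (v z) z)
    (hv : HasDerivAt v (u z) z) (hu₀ : u z ≠ 0) (huv : u z ^ 2 = v z ^ 2) :
    HasDerivAt (weakPrimitive p u v φ) (weakIntegrand p u v φ z) z := by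
  have h := ((hφ.hasDerivAt.const_mul p⁻¹).add
    (hφ'.hasDerivAt.mul (hu.rpow_const (p := p) (.inl hu₀)))).mul hv
  refine h.congr_deriv ?_
  simp only [weakIntegrand, huv, rpow_add_one hu₀, Pi.add_apply, Pi.mul_apply]
  ring

theorem contDiff_weakPrimitive {n : ℕ∞} (hφ : ContDiff ℝ (n + 1) φ) (hu : ContDiff ℝ n u)
    (hv : ContDiff ℝ n v) (hu₀ : ∀ z, u z ≠ 0) : ContDiff ℝ n (weakPrimitive p u v φ) :=
  ((contDiff_const.mul (hφ.of_le le_self_add)).add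
    (hφ.deriv'.mul (hu.rpow_const_of_ne hu₀))).mul hv

theorem hasCompactSupport_weakPrimitive (hφ : HasCompactSupport φ) :
    HasCompactSupport (weakPrimitive p u v φ) :=
  (hφ.mul_left.add hφ.deriv.mul_right).mul_right

end WeakPrimitive

/-- The exponential profile of amplitude `a` and rate `σ`; the peakon is `expProfile a 1` to the
left of its crest and `expProfile a (-1)` to the right. -/
noncomputable def expProfile (a σ z : ℝ) : ℝ :=
  a * exp (σ * z)

section ExpProfile

variable {p a σ : ℝ} {φ : ℝ → ℝ}

theorem contDiff_expProfile {n : ℕ∞} : ContDiff ℝ n (expProfile a σ) := by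
  unfold expProfile
  fun_prop

theorem expProfile_ne_zero (ha : a ≠ 0) (z : ℝ) : expProfile a σ z ≠ 0 :=
  mul_ne_zero ha (exp_ne_zero _)

theorem hasDerivAt_expProfile (z : ℝ) :
    HasDerivAt (expProfile a σ) (σ * expProfile a σ z) z :=
  (((hasDerivAt_id z).const_mul σ).exp.const_mul a).congr_deriv (by
    simp only [expProfile, id_eq]
    ring)

theorem deriv_weakPrimitive_expProfile (ha : a ≠ 0) (hσ : σ ^ 2 = 1) (hφ : ContDiff ℝ 2 φ) :
    deriv (weakPrimitive p (expProfile a σ) (fun z ↦ σ * expProfile a σ z) φ) =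
      weakIntegrand p (expProfile a σ) (fun z ↦ σ * expProfile a σ z) φ := by
  ext z
  have slope_deriv : HasDerivAt (fun z ↦ σ * expProfile a σ z) (expProfile a σ z) z :=
    ((hasDerivAt_expProfile z).const_mul σ).congr_deriv (by
      rw [← mul_assoc, ← sq, hσ, one_mul])
  have slope_sq : expProfile a σ z ^ 2 = (σ * expProfile a σ z) ^ 2 := by
    rw [mul_pow, hσ, one_mul]
  exact (hasDerivAt_weakPrimitive (hφ.differentiable two_ne_zero z)
    (hφ.differentiable_deriv_two z) (hasDerivAt_expProfile z) slope_deriv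
    (expProfile_ne_zero ha z) slope_sq).deriv

end ExpProfile

/-- The peakon profile of amplitude `a`, with its crest at `0`. -/
noncomputable def peakon (a z : ℝ) : ℝ :=
  a * exp (-|z|)

/-- The slope of `peakon a`, given the value `0` at the crest. -/
noncomputable def peakonSlope (a z : ℝ) : ℝ :=
  -a * Real.sign z * exp (-|z|)

section Peakon

variable {p a : ℝ} {φ : ℝ → ℝ}

theorem weakIntegrand_peakon_of_neg {z : ℝ} (hz : z < 0) :
    weakIntegrand p (peakon a) (peakonSlope a) φ z =
      weakIntegrand p (expProfile a 1) (fun z ↦ 1 * expProfile a 1 z) φ z := by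
  simp [weakIntegrand, peakon, peakonSlope, expProfile, abs_of_neg hz, Real.sign_of_neg hz]

theorem weakIntegrand_peakon_of_pos {z : ℝ} (hz : 0 < z) :
    weakIntegrand p (peakon a) (peakonSlope a) φ z =
      weakIntegrand p (expProfile a (-1)) (fun z ↦ -1 * expProfile a (-1) z) φ z := by
  simp [weakIntegrand, peakon, peakonSlope, expProfile, abs_of_pos hz, Real.sign_of_pos hz]

theorem integral_weakIntegrand_peakon (ha : a ≠ 0) (hφ : ContDiff ℝ 2 φ)
    (hφc : HasCompactSupport φ) :
    ∫ z, weakIntegrand p (peakon a) (peakonSlope a) φ z =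
      2 * a * (p⁻¹ * φ 0 + a ^ p * deriv φ 0) := by
  have primitive_contDiff (σ : ℝ) :
      ContDiff ℝ 1 (weakPrimitive p (expProfile a σ) (fun z ↦ σ * expProfile a σ z) φ) :=
    contDiff_weakPrimitive (n := 1) (by simpa [one_add_one_eq_two] using hφ) contDiff_expProfile
      (contDiff_const.mul contDiff_expProfile) (expProfile_ne_zero ha)
  rw [integral_eq_sub_of_eqOn_deriv
    (primitive_contDiff 1) (hasCompactSupport_weakPrimitive hφc)
    (primitive_contDiff (-1)) (hasCompactSupport_weakPrimitive hφc)
    (fun z hz ↦ by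
      rw [deriv_weakPrimitive_expProfile ha (one_pow 2) hφ, weakIntegrand_peakon_of_neg hz])
    (fun z hz ↦ by
      rw [deriv_weakPrimitive_expProfile ha neg_one_sq hφ, weakIntegrand_peakon_of_pos hz])]
  simp only [weakPrimitive, expProfile, mul_zero, exp_zero, mul_one]
  ring

end Peakon

theorem deriv_contDiffBump_center {c : ℝ} (b : ContDiffBump c) : deriv b c = 0 := by
  rw [b.eventuallyEq_one.deriv_eq, Pi.one_def, deriv_const]

-- For `a < 0` the powers of `U` are those of `Real.rpow`: the usual ones when `p` is an integer,
-- and `|U| ^ p * cos (π * p)` in general.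
theorem peakon_not_weak_solution_of_similarity_ODE_general {p a : ℝ} (hp : p ≠ 0) (ha : a ≠ 0)
    {U V : ℝ → ℝ} (hU : ∀ z, U z = a * exp (-|z|))
    (hV : ∀ z, V z = -a * Real.sign z * exp (-|z|)) :
    ∃ φ : ℝ → ℝ, ContDiff ℝ (⊤ : ℕ∞) φ ∧ HasCompactSupport φ ∧
      ∫ z, weakIntegrand p U V φ z ≠ 0 := by
  obtain rfl : U = peakon a := funext hU
  obtain rfl : V = peakonSlope a := funext hV
  let b : ContDiffBump (0 : ℝ) := ⟨1, 2, one_pos, one_lt_two⟩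
  refine ⟨b, b.contDiff, b.hasCompactSupport, ?_⟩
  have bump_center : b 0 = 1 := b.eventuallyEq_one.eq_of_nhds
  rw [integral_weakIntegrand_peakon ha b.contDiff b.hasCompactSupport, bump_center,
    deriv_contDiffBump_center, mul_one, mul_zero, add_zero]
  exact mul_ne_zero (mul_ne_zero two_ne_zero ha) (inv_ne_zero hp)

theorem peakon_not_weak_solution_of_similarity_ODE (p : ℝ) (hp : 0 < p)
    (a : ℝ) (ha : 0 < a)
    (U V : ℝ → ℝ)
    (hU : ∀ z : ℝ, U z = a * Real.exp (-|z|))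
    (hV : ∀ z : ℝ, V z = -a * Real.sign z * Real.exp (-|z|)) :
    ∃ φ : ℝ → ℝ, ContDiff ℝ (⊤ : ℕ∞) φ ∧ HasCompactSupport φ ∧
      ∫ z : ℝ,
        (p⁻¹ * (φ z * U z + deriv φ z * V z)
          + (1/2) * p * deriv φ z * U z ^ (p-1) * ((U z)^2 - (V z)^2)
          + deriv φ z * U z ^ (p+1)
          + (deriv (deriv φ) z * U z ^ p + p * deriv φ z * U z ^ (p-1) * V z) * V z) ≠ 0 :=
  peakon_not_weak_solution_of_similarity_ODE_general hp.ne' ha.ne' hU hV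
end
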